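/- arXiv:1811.01377 — 2 statements merged into one kernel-verified Lean document; each statement's English description precedes it below -/
import Mathlib

section
/- Let g, l, N, k, d', d'', m be integers with g ≥ 2, l ≥ 1, N ≥ l + 2, k ≥ 0, and 0 ≤ m ≤ k, and let A', A'' be rational numbers with 0 ≤ A' ≤ k(l - 1) and 0 ≤ A'' ≤ k(l - 1). Set d = d' + d'' and δ = (d'' - d') + (A'' - A')/l. Assume δ > 0 and (d - δ)/2 - k > 2g - 1. Then N·(d'' + 1 - g) - (d'' - d' + 1 - g) + m > l·δ/2. -/
/-!
The left-hand side `n₊` rearranges to `(N - 1) (d'' + 1 - g) + d' + m`. Writing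
`e = (A'' - A') / l`, we have `(d - δ) / 2 = d' - e / 2`, so largeness of `(d - δ) / 2` makes both
`d'` and `d'' - δ` exceed `2 g - 1` as soon as `|e| ≤ 2 k`. Hence `n₊ > (N - 1) δ ≥ l δ / 2`.
-/

section OrderedField

variable {K : Type*} [Field K] [LinearOrder K] [IsStrictOrderedRing K]

theorem two_mul_sub_one_lt_subDegree {g k d' d'' e δ : K} (hδ : δ = d'' - d' + e)
    (he : -(2 * k) ≤ e) (hbig : 2 * g - 1 < (d' + d'' - δ) / 2 - k) :
    2 * g - 1 < d' := by
  linarith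

theorem add_two_mul_sub_one_lt_quotientDegree {g k d' d'' e δ : K} (hδ : δ = d'' - d' + e)
    (he : e ≤ 2 * k) (hbig : 2 * g - 1 < (d' + d'' - δ) / 2 - k) :
    δ + (2 * g - 1) < d'' := by
  linarith

theorem parabolic_rank_two_wall_crossing_rank_ineq_general {g l N k d' d'' m A' A'' δ : K}
    (hg : 1 ≤ g) (hl : 0 < l) (hN : l / 2 + 1 ≤ N) (hm : 0 ≤ m)
    (hA : |A'' - A'| ≤ 2 * k * l) (hδ : δ = (d'' - d') + (A'' - A') / l) (hδ0 : 0 ≤ δ)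
    (hbig : 2 * g - 1 < (d' + d'' - δ) / 2 - k) :
    l * δ / 2 < N * (d'' + 1 - g) - (d'' - d' + 1 - g) + m := by
  have he : |(A'' - A') / l| ≤ 2 * k := by
    rwa [abs_div, abs_of_pos hl, div_le_iff₀ hl]
  obtain ⟨he_lower, he_upper⟩ := abs_le.mp he
  have hd' : 0 < d' := by
    linarith [two_mul_sub_one_lt_subDegree hδ he_lower hbig]
  have hd'' : δ ≤ d'' + 1 - g := by
    linarith [add_two_mul_sub_one_lt_quotientDegree hδ he_upper hbig]
  have hlN : l / 2 ≤ N - 1 := by linarith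
  have hN1 : 0 ≤ N - 1 := by linarith
  calc l * δ / 2 = l / 2 * δ := by ring
    _ ≤ (N - 1) * (d'' + 1 - g) := by gcongr
    _ < (N - 1) * (d'' + 1 - g) + d' := lt_add_of_pos_right _ hd'
    _ ≤ (N - 1) * (d'' + 1 - g) + d' + m := le_add_of_nonneg_right hm
    _ = N * (d'' + 1 - g) - (d'' - d' + 1 - g) + m := by ring

end OrderedField

/-- Let `g, l, N, k, d', d'', m` be integers with `g ≥ 2`, `l ≥ 1`, `N ≥ l + 2`, `k ≥ 0`,
and `0 ≤ m ≤ k`, and let `A', A''` be rational numbers with `0 ≤ A' ≤ k(l - 1)` and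
`0 ≤ A'' ≤ k(l - 1)`. Set `d = d' + d''` and `δ = (d'' - d') + (A'' - A')/l`. Assume
`δ > 0` and `(d - δ)/2 - k > 2g - 1`. Then
`N·(d'' + 1 - g) - (d'' - d' + 1 - g) + m > l·δ/2`. -/
theorem parabolic_rank_two_wall_crossing_rank_ineq
    (g l N k d' d'' m : ℤ) (hg : 2 ≤ g) (hl : 1 ≤ l) (hN : l + 2 ≤ N)
    (hk : 0 ≤ k) (hm0 : 0 ≤ m) (hmk : m ≤ k)
    (A' A'' : ℚ) (hA'0 : 0 ≤ A') (hA'1 : A' ≤ (k : ℚ) * ((l : ℚ) - 1))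
    (hA''0 : 0 ≤ A'') (hA''1 : A'' ≤ (k : ℚ) * ((l : ℚ) - 1))
    (d : ℤ) (hd : d = d' + d'')
    (δ : ℚ) (hδ : δ = ((d'' : ℚ) - (d' : ℚ)) + (A'' - A') / (l : ℚ))
    (hδpos : 0 < δ) (hbig : ((d : ℚ) - δ) / 2 - (k : ℚ) > 2 * (g : ℚ) - 1) :
    (N : ℚ) * ((d'' : ℚ) + 1 - (g : ℚ)) - ((d'' : ℚ) - (d' : ℚ) + 1 - (g : ℚ)) + (m : ℚ)
      > (l : ℚ) * δ / 2 := by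
  qify at hg hl hN hk hm0 hd
  have hA : |A'' - A'| ≤ 2 * k * l :=
    (abs_sub_le_of_nonneg_of_le hA''0 hA''1 hA'0 hA'1).trans (by gcongr <;> linarith)
  exact parabolic_rank_two_wall_crossing_rank_ineq_general (by linarith) (by linarith)
    (by linarith) hm0 hA hδ hδpos.le (hd ▸ hbig)
end

section
/- Let n, N, l, j be integers with n ≥ 1, l ≥ 0, N ≥ n + 2l, and j ≥ 0. Let r_1, ..., r_{j+1} be positive integers with r_1 + ... + r_{j+1} = n, and let D_1 ≤ D_2 ≤ ... ≤ D_{j+1} be nonnegative integers such that d' := ∑_{a=1}^{j+1} r_a · D_a ≥ 1. Then N·∑_{a=1}^{j+1} r_a (D_a + 1) D_a - ( ∑_{1 ≤ a < b ≤ j+1} r_a r_b (D_b - D_a + 1)(D_b - D_a) + l·∑_{a=1}^{j+1} r_a (D_a + 1) D_a + 2·l·d' ) ≥ 2·d'·(N - 2l - (n - 1)), and in particular this difference is strictly positive. -/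
/-!
Write `S = ∑ r_a (D_a + 1) D_a` and `P` for the sum over pairs `a < b`. For nonnegative `x, y`,
`(x + 1) x + (y + 1) y - (y - x + 1) (y - x) = 2 x (y + 1) ≥ 0`, so each pair contributes at most
`r_a r_b ((D_a + 1) D_a + (D_b + 1) D_b)` to `P`, in whichever order `D_a` and `D_b` stand.
Collecting the terms with a given `D_a` yields `P ≤ ∑ r_a (n - r_a) (D_a + 1) D_a ≤ (n - 1) S`.
Since moreover `S ≥ 2 d'`, the difference
`N S - P - l S - 2 l d' - 2 d' (N - 2 l - (n - 1))
  = (N - l - (n - 1)) (S - 2 d') + ((n - 1) S - P)` is a sum of two nonnegative terms.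
-/

open Finset

section OrderedRing

variable {R : Type*} [CommRing R]

theorem sub_add_one_mul_sub_le [PartialOrder R] [IsOrderedRing R] {x y : R}
    (hx : 0 ≤ x) (hy : 0 ≤ y) :
    (y - x + 1) * (y - x) ≤ (x + 1) * x + (y + 1) * y := by
  have hxy : 0 ≤ 2 * x * (y + 1) :=
    mul_nonneg (mul_nonneg zero_le_two hx) (add_nonneg hy zero_le_one)
  calc (y - x + 1) * (y - x) ≤ (y - x + 1) * (y - x) + 2 * x * (y + 1) :=
        le_add_of_nonneg_right hxy
    _ = (x + 1) * x + (y + 1) * y := by ring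

variable {ι : Type*} [Fintype ι] [LinearOrder ι]

theorem sum_sum_filter_lt_mul_mul_add (r s : ι → R) :
    ∑ a, ∑ b with a < b, r a * r b * (s a + s b) = ∑ a, r a * (∑ b, r b - r a) * s a := by
  let := LocallyFiniteOrderTop.ofIci ι (fun a => {b | a ≤ b}) (by simp)
  let := LocallyFiniteOrderBot.ofIic ι (fun a => {b | b ≤ a}) (by simp)
  simp only [filter_lt_eq_Ioi]
  calc ∑ a, ∑ b ∈ Ioi a, r a * r b * (s a + s b)
      = ∑ a, ∑ b ∈ Ioi a, (r b * r a * s a + r a * r b * s b) := by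
        refine sum_congr rfl fun a _ => sum_congr rfl fun b _ => ?_
        ring
    _ = ∑ a, ∑ b ∈ {a}ᶜ, r b * r a * s a :=
        sum_sum_Ioi_add_eq_sum_sum_off_diag fun b a => r b * r a * s a
    _ = ∑ a, r a * (∑ b, r b - r a) * s a := by
        refine sum_congr rfl fun a _ => ?_
        rw [← sum_mul, ← sum_mul, Fintype.sum_eq_add_sum_compl a r]
        ring

theorem sum_sum_filter_lt_mul_sub_add_one_mul_sub_le [PartialOrder R] [IsOrderedRing R]
    {r D : ι → R} (hr : ∀ a, 0 ≤ r a) (hD : ∀ a, 0 ≤ D a) :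
    ∑ a, ∑ b with a < b, r a * r b * (D b - D a + 1) * (D b - D a)
      ≤ ∑ a, r a * (∑ b, r b - r a) * ((D a + 1) * D a) := by
  rw [← sum_sum_filter_lt_mul_mul_add]
  refine sum_le_sum fun a _ => sum_le_sum fun b _ => ?_
  rw [mul_assoc]
  exact mul_le_mul_of_nonneg_left (sub_add_one_mul_sub_le (hD a) (hD b))
    (mul_nonneg (hr a) (hr b))

end OrderedRing

section Int

variable {ι : Type*} [Fintype ι] {r D : ι → ℤ}

theorem two_mul_sum_mul_le_sum_mul_add_one_mul (hr : ∀ a, 0 ≤ r a) :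
    2 * ∑ a, r a * D a ≤ ∑ a, r a * (D a + 1) * D a := by
  rw [mul_sum]
  refine sum_le_sum fun a _ => ?_
  calc 2 * (r a * D a) = r a * (D a + D a) := by ring
    _ ≤ r a * (D a ^ 2 + D a) := by gcongr; exacts [hr a, Int.le_self_sq _]
    _ = r a * (D a + 1) * D a := by ring

theorem sum_mul_sum_sub_mul_le {s : ι → ℤ} (hs : ∀ a, 0 ≤ s a) :
    ∑ a, r a * (∑ b, r b - r a) * s a ≤ (∑ b, r b - 1) * ∑ a, r a * s a := by
  rw [mul_sum]
  refine sum_le_sum fun a _ => ?_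
  have hra : r a * (∑ b, r b - r a) ≤ (∑ b, r b - 1) * r a := by
    linarith [Int.le_self_sq (r a)]
  calc r a * (∑ b, r b - r a) * s a ≤ (∑ b, r b - 1) * r a * s a :=
        mul_le_mul_of_nonneg_right hra (hs a)
    _ = (∑ b, r b - 1) * (r a * s a) := mul_assoc _ _ _

variable [LinearOrder ι]

theorem sum_sum_filter_lt_mul_sub_add_one_mul_sub_le_sum_sub_one_mul
    (hr : ∀ a, 0 ≤ r a) (hD : ∀ a, 0 ≤ D a) :
    ∑ a, ∑ b with a < b, r a * r b * (D b - D a + 1) * (D b - D a)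
      ≤ (∑ a, r a - 1) * ∑ a, r a * (D a + 1) * D a := by
  have hs (a : ι) : 0 ≤ (D a + 1) * D a := mul_nonneg (by linarith [hD a]) (hD a)
  simpa only [mul_assoc] using
    (sum_sum_filter_lt_mul_sub_add_one_mul_sub_le hr hD).trans (sum_mul_sum_sub_mul_le hs)

end Int

theorem quasimap_I_function_degree_estimate_general {ι : Type*} [Fintype ι] [LinearOrder ι]
    {n N l : ℤ} (hNl : n + l - 1 ≤ N) (hN : n + 2 * l ≤ N)
    {r D : ι → ℤ} (hr : ∀ a, 0 ≤ r a) (hrsum : ∑ a, r a = n) (hD : ∀ a, 0 ≤ D a)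
    {d' : ℤ} (hd' : d' = ∑ a, r a * D a) (hd'1 : 1 ≤ d') :
    N * (∑ a, r a * (D a + 1) * D a)
        - ((∑ a, ∑ b with a < b, r a * r b * (D b - D a + 1) * (D b - D a))
          + l * (∑ a, r a * (D a + 1) * D a) + 2 * l * d')
      ≥ 2 * d' * (N - 2 * l - (n - 1)) ∧
    0 < N * (∑ a, r a * (D a + 1) * D a)
        - ((∑ a, ∑ b with a < b, r a * r b * (D b - D a + 1) * (D b - D a))
          + l * (∑ a, r a * (D a + 1) * D a) + 2 * l * d') := by
  have hP := sum_sum_filter_lt_mul_sub_add_one_mul_sub_le_sum_sub_one_mul hr hD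
  have hS := two_mul_sum_mul_le_sum_mul_add_one_mul (D := D) hr
  rw [hrsum] at hP
  rw [← hd'] at hS
  set S := ∑ a, r a * (D a + 1) * D a
  set P := ∑ a, ∑ b with a < b, r a * r b * (D b - D a + 1) * (D b - D a)
  have hle : 2 * d' * (N - 2 * l - (n - 1)) ≤ N * S - (P + l * S + 2 * l * d') := by
    have hmul : 0 ≤ (N - l - (n - 1)) * (S - 2 * d') :=
      mul_nonneg (by linarith) (sub_nonneg.mpr hS)
    linarith
  have hpos : 0 < 2 * d' * (N - 2 * l - (n - 1)) := mul_pos (by linarith) (by linarith)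
  exact ⟨hle, hpos.trans_le hle⟩

/-- Let `n, N, l, j` be integers with `n ≥ 1`, `l ≥ 0`, `N ≥ n + 2l`, and `j ≥ 0`. Let
`r_1, ..., r_{j+1}` be positive integers with `r_1 + ... + r_{j+1} = n`, and let
`D_1 ≤ D_2 ≤ ... ≤ D_{j+1}` be nonnegative integers such that
`d' := ∑_{a} r_a · D_a ≥ 1`.  Then
`N·∑_a r_a (D_a + 1) D_a - (∑_{a<b} r_a r_b (D_b - D_a + 1)(D_b - D_a)
  + l·∑_a r_a (D_a + 1) D_a + 2·l·d') ≥ 2·d'·(N - 2l - (n - 1))`,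
and in particular this difference is strictly positive. -/
theorem quasimap_I_function_degree_estimate
    (n N l : ℤ) (j : ℕ) (hn : 1 ≤ n) (hl : 0 ≤ l) (hN : n + 2 * l ≤ N)
    (r D : Fin (j + 1) → ℤ)
    (hr : ∀ a, 0 < r a) (hrsum : ∑ a, r a = n)
    (hD0 : ∀ a, 0 ≤ D a) (hDmono : ∀ a b : Fin (j + 1), a ≤ b → D a ≤ D b)
    (d' : ℤ) (hd' : d' = ∑ a, r a * D a) (hd'1 : 1 ≤ d') :
    N * (∑ a, r a * (D a + 1) * D a)
        - ((∑ a, ∑ b ∈ univ.filter (fun b => a < b),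
              r a * r b * (D b - D a + 1) * (D b - D a))
          + l * (∑ a, r a * (D a + 1) * D a) + 2 * l * d')
      ≥ 2 * d' * (N - 2 * l - (n - 1)) ∧
    0 < N * (∑ a, r a * (D a + 1) * D a)
        - ((∑ a, ∑ b ∈ univ.filter (fun b => a < b),
              r a * r b * (D b - D a + 1) * (D b - D a))
          + l * (∑ a, r a * (D a + 1) * D a) + 2 * l * d') := by
  exact quasimap_I_function_degree_estimate_general (by linarith) hN (fun a => (hr a).le) hrsum
    hD0 hd' hd'1
end
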